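/- arXiv:1512.05752 — 2 statements merged into one kernel-verified Lean document; each statement's English description precedes it below -/
import Mathlib

section
/- Let L be a finite-dimensional solvable Leibniz algebra over a field F that is minimally non-strongly-solvable (L is not strongly solvable but every proper subalgebra of L is strongly solvable). Then L is two-generated. -/
/-!
Basic theory of (left) Leibniz algebras, formalized over an arbitrary field `F`.
A Leibniz algebra structure on an `F`-vector space `L` is given by a bilinear
multiplication `m : L →ₗ[F] L →ₗ[F] L` satisfying the left Leibniz identity.
-/

open Submodule Module

section LeibnizDefs

variable {F : Type*} [Field F] {L : Type*} [AddCommGroup L] [Module F L]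
variable (m : L →ₗ[F] L →ₗ[F] L)

/-- The left Leibniz identity: `a(bc) = (ab)c + b(ac)`. -/
def IsLeibniz : Prop :=
  ∀ a b c : L, m a (m b c) = m (m a b) c + m b (m a c)

/-- The multiplication is antisymmetric, i.e. the algebra is a Lie algebra. -/
def IsLie : Prop := ∀ a b : L, m a b = - m b a

/-- The product of two subspaces: the span of all products `x·y`, `x ∈ P`, `y ∈ Q`. -/
abbrev mprod (P Q : Submodule F L) : Submodule F L := Submodule.map₂ m P Q

/-- A subalgebra: a subspace closed under multiplication. -/
def IsSubalg (S : Submodule F L) : Prop := ∀ x ∈ S, ∀ y ∈ S, m x y ∈ S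

/-- An ideal of `L`: a subspace `I` with `L·I ⊆ I` and `I·L ⊆ I`. -/
def IsIdeal (I : Submodule F L) : Prop :=
  ∀ (x : L), ∀ y ∈ I, m x y ∈ I ∧ m y x ∈ I

/-- An ideal `I` of a subalgebra `S`. -/
def IsIdealOf (S I : Submodule F L) : Prop :=
  I ≤ S ∧ ∀ x ∈ S, ∀ y ∈ I, m x y ∈ I ∧ m y x ∈ I

/-- A minimal ideal: a nonzero ideal containing no nonzero proper subideal of `L`. -/
def IsMinIdeal (A : Submodule F L) : Prop :=
  IsIdeal m A ∧ A ≠ ⊥ ∧ ∀ J, IsIdeal m J → J ≤ A → J = ⊥ ∨ J = A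

/-- The derived series of a subspace: `S^(0) = S`, `S^(n+1) = S^(n)·S^(n)`. -/
def derSeries (S : Submodule F L) : ℕ → Submodule F L
  | 0 => S
  | n + 1 => mprod m (derSeries S n) (derSeries S n)

/-- A subalgebra is solvable if its derived series reaches `0`. -/
def IsSolvableSub (S : Submodule F L) : Prop := ∃ n, derSeries m S n = ⊥

/-- The Leibniz algebra `L` is solvable. -/
abbrev IsSolvableAlg : Prop := IsSolvableSub m (⊤ : Submodule F L)

/-- The lower central series of a subspace: `N^1 = N`, `N^(k+1) = N·N^k`. -/
def lcSeries (N : Submodule F L) : ℕ → Submodule F L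
  | 0 => N
  | k + 1 => mprod m N (lcSeries N k)

/-- A subalgebra is nilpotent if its lower central series reaches `0`. -/
def IsNilpotentSub (N : Submodule F L) : Prop := ∃ k, lcSeries m N k = ⊥

/-- A subalgebra `S` is strongly solvable if `S² = S·S` is nilpotent. -/
def IsStronglySolvable (S : Submodule F L) : Prop :=
  IsNilpotentSub m (mprod m S S)

/-- A maximal subalgebra: a proper subalgebra not contained in any larger proper
subalgebra. -/
def IsMaxSubalg (S : Submodule F L) : Prop :=
  IsSubalg m S ∧ S ≠ ⊤ ∧ ∀ T, IsSubalg m T → S ≤ T → T = S ∨ T = ⊤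

/-- The Frattini subalgebra `F(L)`: the intersection of all maximal subalgebras. -/
def frattiniSub : Submodule F L := sInf {S | IsMaxSubalg m S}

/-- The Frattini ideal `φ(L)`: the largest ideal contained in the Frattini
subalgebra. -/
def frattiniIdeal : Submodule F L :=
  sSup {I | IsIdeal m I ∧ I ≤ frattiniSub m}

/-- `Leib(L)`: the span of all squares `x·x`. -/
def leibIdeal : Submodule F L := Submodule.span F {z | ∃ x : L, z = m x x}

/-- The subalgebra generated by a set. -/
def genBy (s : Set L) : Submodule F L := sInf {S | IsSubalg m S ∧ s ⊆ S}

/-- A subalgebra is two-generated if it is generated as an algebra by two elements. -/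
def TwoGenerated (S : Submodule F L) : Prop := ∃ x y : L, genBy m {x, y} = S

/-- A subalgebra `S` is supersolvable if there is a chain of ideals of `S`,
`0 = S₀ ⊂ S₁ ⊂ ⋯ ⊂ Sₙ = S`, with `dim Sᵢ = i`. -/
def IsSupersolvable (S : Submodule F L) : Prop :=
  ∃ (n : ℕ) (c : ℕ → Submodule F L), c 0 = ⊥ ∧ c n = S ∧
    (∀ i, i < n → c i ≤ c (i + 1)) ∧
    (∀ i, i ≤ n → IsIdealOf m S (c i)) ∧
    (∀ i, i ≤ n → Module.finrank F (c i) = i)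

/-- A subspace `S` is nil on `L` if left multiplication by each of its elements is a
nilpotent operator. -/
def IsNilOn (S : Submodule F L) : Prop :=
  ∀ x ∈ S, IsNilpotent (m x : Module.End F L)

open scoped TensorProduct in
/-- A subspace `S` is triangulable on `L` if, after extending scalars to the algebraic
closure `K` of `F`, the space `K ⊗ L` admits a basis with respect to which the left
multiplication operators by all elements of `K ⊗ S` are upper triangular matrices.
(Since upper triangular matrices form a `K`-subspace of matrices, it suffices that the
base-changed left multiplication by each `x ∈ S` is upper triangular.) -/
def IsTriangulableOn (S : Submodule F L) : Prop :=
  ∃ (n : ℕ) (b : Basis (Fin n) (AlgebraicClosure F) ((AlgebraicClosure F) ⊗[F] L)),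
    ∀ x ∈ S, ∀ i j : Fin n, j < i →
      LinearMap.toMatrix b b (LinearMap.baseChange (AlgebraicClosure F) (m x)) i j = 0

end LeibnizDefs

section Helpers

variable {F : Type*} [Field F] {L : Type*} [AddCommGroup L] [Module F L]
variable {m : L →ₗ[F] L →ₗ[F] L}

/-- Product of left ideals is a left ideal. -/
lemma mprod_left (hm : IsLeibniz m) {P Q : Submodule F L} (hP : ∀ x, ∀ y ∈ P, m x y ∈ P)
    (hQ : ∀ x, ∀ y ∈ Q, m x y ∈ Q) : ∀ x, ∀ y ∈ mprod m P Q, m x y ∈ mprod m P Q := by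
  intro x y hy
  have key : mprod m P Q ≤ Submodule.comap (m x) (mprod m P Q) := by
    refine Submodule.map₂_le.2 fun p hp q hq => ?_
    show m x (m p q) ∈ mprod m P Q
    rw [hm]
    exact Submodule.add_mem _ (Submodule.apply_mem_map₂ _ (hP x p hp) hq)
      (Submodule.apply_mem_map₂ _ hp (hQ x q hq))
  exact key hy

lemma mprod_self_ideal (hm : IsLeibniz m) {A : Submodule F L} (hA : IsIdeal m A) :
    IsIdeal m (mprod m A A) := by
  intro x y hy
  refine ⟨mprod_left hm (fun x y h => (hA x y h).1) (fun x y h => (hA x y h).1) x y hy, ?_⟩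
  have key : mprod m A A ≤ Submodule.comap (m.flip x) (mprod m A A) := by
    refine Submodule.map₂_le.2 fun p hp q hq => ?_
    show m (m p q) x ∈ mprod m A A
    have h : m (m p q) x = m p (m q x) - m q (m p x) := by rw [hm p q x]; abel
    rw [h]
    exact Submodule.sub_mem _ (Submodule.apply_mem_map₂ _ hp (hA x q hq).2)
      (Submodule.apply_mem_map₂ _ hq (hA x p hp).2)
  exact key hy

lemma lcSeries_left (hm : IsLeibniz m) {N : Submodule F L} (hN : ∀ x, ∀ y ∈ N, m x y ∈ N)
    (j : ℕ) : ∀ x, ∀ y ∈ lcSeries m N j, m x y ∈ lcSeries m N j := by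
  induction j with
  | zero => exact hN
  | succ j ih => exact mprod_left hm hN ih

/-- Left submodules of a minimal ideal are trivial. -/
lemma minIdeal_irred (hm : IsLeibniz m) {A : Submodule F L} (hA : IsMinIdeal m A)
    (B : Submodule F L) (hBA : B ≤ A) (hB : ∀ x, ∀ y ∈ B, m x y ∈ B) : B = ⊥ ∨ B = A := by
  obtain ⟨hI, hne, hmin⟩ := hA
  refine hmin B ?_ hBA
  have hker : IsIdeal m (A ⊓ LinearMap.ker m) := by
    rintro x y ⟨hy, hy2⟩
    have hy2 : m y = 0 := hy2
    refine ⟨⟨(hI x y hy).1, ?_⟩, ?_⟩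
    · show m (m x y) = 0
      ext t
      have e1 := hm x y t
      rw [hy2] at e1
      simpa using e1.symm
    · rw [hy2]; exact Submodule.zero_mem _
  rcases hmin (A ⊓ LinearMap.ker m) hker inf_le_left with h | h
  · intro x y hy
    refine ⟨hB x y hy, ?_⟩
    have h1 : m y x + m x y ∈ A ⊓ LinearMap.ker m := by
      refine ⟨A.add_mem (hI x y (hBA hy)).2 (hI x y (hBA hy)).1, ?_⟩
      show m (m y x + m x y) = 0
      ext t
      have e1 := hm x y t
      have e2 := hm y x t
      simp only [map_add, LinearMap.add_apply, LinearMap.zero_apply]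
      rw [e2] at e1
      have : m x (m y t) = m (m x y) t + (m (m y x) t + m x (m y t)) := e1
      rw [← add_assoc] at this
      rw [add_comm]
      exact left_eq_add.1 (by rw [add_comm]; exact this)
    rw [h, Submodule.mem_bot] at h1
    rw [eq_neg_of_add_eq_zero_left h1]
    exact B.neg_mem (hB x y hy)
  · intro x y hy
    refine ⟨hB x y hy, ?_⟩
    have h1 : y ∈ A ⊓ LinearMap.ker m := by rw [h]; exact hBA hy
    have h2 : m y = 0 := h1.2
    rw [h2]; exact B.zero_mem

lemma exists_minIdeal [FiniteDimensional F L] [Nontrivial L] (m : L →ₗ[F] L →ₗ[F] L) :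
    ∃ A, IsMinIdeal m A := by
  obtain ⟨A, ⟨hA, hA0⟩, hmin⟩ := (wellFounded_lt (α := Submodule F L)).has_min
    {I | IsIdeal m I ∧ I ≠ ⊥} ⟨⊤, fun _ _ _ => ⟨trivial, trivial⟩, top_ne_bot⟩
  refine ⟨A, hA, hA0, fun J hJ hJA => ?_⟩
  by_contra! h
  exact hmin J ⟨hJ, h.1⟩ (lt_of_le_of_ne hJA h.2)

/-- A nonzero subspace stable under `Z` contains a minimal such. -/
lemma exists_minStable [FiniteDimensional F L] (Z A : Submodule F L) (hA0 : A ≠ ⊥)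
    (hA : ∀ x ∈ Z, ∀ y ∈ A, m x y ∈ A) :
    ∃ B ≤ A, B ≠ ⊥ ∧ (∀ x ∈ Z, ∀ y ∈ B, m x y ∈ B) ∧
      ∀ B' ≤ B, (∀ x ∈ Z, ∀ y ∈ B', m x y ∈ B') → B' = ⊥ ∨ B' = B := by
  obtain ⟨B, ⟨hBA, hB0, hB⟩, hmin⟩ := (wellFounded_lt (α := Submodule F L)).has_min
    {I | I ≤ A ∧ I ≠ ⊥ ∧ ∀ x ∈ Z, ∀ y ∈ I, m x y ∈ I} ⟨A, le_rfl, hA0, hA⟩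
  refine ⟨B, hBA, hB0, hB, fun J hJB hJ => ?_⟩
  by_contra! h
  exact hmin J ⟨hJB.trans hBA, h.1, hJ⟩ (lt_of_le_of_ne hJB h.2)

lemma pow_inj {f : Module.End F L} {B : Submodule F L} (hB : ∀ y ∈ B, f y ∈ B)
    (hf : ∀ y ∈ B, f y = 0 → y = 0) (n : ℕ) : ∀ y ∈ B, (f ^ n) y = 0 → y = 0 := by
  induction n with
  | zero => intro y _ h; simpa using h
  | succ n ih =>
    intro y hy h
    rw [pow_succ, Module.End.mul_apply] at h
    exact hf y hy (ih _ (hB y hy) h)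

lemma core [FiniteDimensional F L] (hm : IsLeibniz m) (hsolv : IsSolvableAlg m)
    (H : ∀ p q : L, ∃ n : ℕ, ((m (m p q) : Module.End F L) ^ n) p = 0 ∧
      ((m (m p q) : Module.End F L) ^ n) q = 0)
    {A : Submodule F L} (hA : IsMinIdeal m A) {k : ℕ}
    (hk : lcSeries m (mprod m ⊤ ⊤) k ≤ A) : IsStronglySolvable m (⊤ : Submodule F L) := by
  have hI := hA.1
  have hA0 := hA.2.1
  have hAA : mprod m A A = ⊥ := by
    rcases hA.2.2 _ (mprod_self_ideal hm hI)
      (Submodule.map₂_le.2 fun p hp q hq => (hI p q hq).1) with h | h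
    · exact h
    · exfalso
      obtain ⟨n, hn⟩ := hsolv
      have : ∀ n, A ≤ derSeries m ⊤ n := by
        intro n
        induction n with
        | zero => exact le_top
        | succ n ih => rw [← h]; exact Submodule.map₂_le_map₂ ih ih
      exact hA0 (le_bot_iff.1 (hn ▸ this n))
  have hAA' : ∀ a ∈ A, ∀ b ∈ A, m a b = 0 := fun a ha b hb => by
    have := Submodule.apply_mem_map₂ m ha hb
    rw [show Submodule.map₂ m A A = ⊥ from hAA] at this
    simpa using this
  set N := mprod m (⊤ : Submodule F L) ⊤ with hN
  have hNl : ∀ x, ∀ y ∈ N, m x y ∈ N := fun x y _ =>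
    Submodule.apply_mem_map₂ m (Submodule.mem_top (x := x)) (Submodule.mem_top (x := y))
  have hZN : ∀ j, lcSeries m N j ≤ N := by
    intro j
    cases j with
    | zero => exact le_rfl
    | succ j => exact Submodule.map₂_le_map₂ le_top le_top
  -- the left annihilator condition
  let Ann : Submodule F L → Prop := fun Z => ∀ z ∈ Z, ∀ a ∈ A, m z a = 0
  by_cases h0 : Ann N
  · refine ⟨k + 1, ?_⟩
    rw [eq_bot_iff]
    refine Submodule.map₂_le.2 fun p hp q hq => ?_
    rw [Submodule.mem_bot]
    exact h0 p hp q (hk hq)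
  exfalso
  have hex : ∃ j, Ann (lcSeries m N j) := ⟨k, fun z hz a ha => hAA' z (hk hz) a ha⟩
  obtain ⟨j, hj1, hj2⟩ : ∃ j, ¬ Ann (lcSeries m N j) ∧ Ann (lcSeries m N (j + 1)) := by
    by_contra! hc
    obtain ⟨k, hk⟩ := hex
    have : ∀ j, ¬ Ann (lcSeries m N j) := by
      intro j
      induction j with
      | zero => exact h0
      | succ j ih => exact hc j ih
    exact this k hk
  set Z := lcSeries m N j with hZ
  have hZl : ∀ x, ∀ y ∈ Z, m x y ∈ Z := lcSeries_left hm hNl j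
  have hZZ : ∀ w ∈ Z, ∀ z ∈ Z, ∀ a ∈ A, m (m w z) a = 0 := fun w hw z hz a ha =>
    hj2 _ (Submodule.apply_mem_map₂ m (hZN j hw) hz) a ha
  have hcomm : ∀ w ∈ Z, ∀ z ∈ Z, ∀ a ∈ A, m w (m z a) = m z (m w a) := by
    intro w hw z hz a ha
    rw [hm, hZZ w hw z hz a ha, zero_add]
  have hswap : ∀ z s a, m z (m s a) = - m (m s z) a + m s (m z a) := by
    intro z s a
    rw [hm s z a]; abel
  obtain ⟨P, Q, hPQ⟩ : ∃ P Q, Z = mprod m P Q := by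
    rw [hZ]
    cases j with
    | zero => exact ⟨⊤, ⊤, rfl⟩
    | succ j => exact ⟨N, lcSeries m N j, rfl⟩
  obtain ⟨B, hBA, hB0, hB, hBmin⟩ := exists_minStable (m := m) Z A hA0
    (fun x _ y hy => (hI x y hy).1)
  -- some product is nonzero on B
  obtain ⟨p, q, hz, hzB⟩ : ∃ p q, m p q ∈ Z ∧ ¬ ∀ b ∈ B, m (m p q) b = 0 := by
    by_contra! hc
    have h1 : ∀ z ∈ Z, ∀ b ∈ B, m z b = 0 := by
      intro z hz b hb
      have : mprod m P Q ≤ LinearMap.ker (m.flip b) :=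
        Submodule.map₂_le.2 fun p hp q hq => hc p q (hPQ ▸ Submodule.apply_mem_map₂ m hp hq) b hb
      exact this (hPQ ▸ hz)
    let K : Submodule F L := A ⊓ ⨅ z ∈ Z, LinearMap.ker (m z)
    have hK : ∀ a, a ∈ K ↔ a ∈ A ∧ ∀ z ∈ Z, m z a = 0 := by
      intro a; simp [K, Submodule.mem_iInf]
    rcases minIdeal_irred hm hA K inf_le_left (by
      intro s a ha
      rw [hK] at ha ⊢
      refine ⟨(hI s a ha.1).1, fun z hz => ?_⟩
      rw [hswap, ha.2 z hz, ha.2 _ (hZl s z hz)]; simp) with h | h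
    · apply hB0
      rw [eq_bot_iff, ← h]
      intro b hb
      exact (hK b).2 ⟨hBA hb, fun z hz => h1 z hz b hb⟩
    · exact hj1 fun z hz a ha => ((hK a).1 (h ▸ ha)).2 z hz
  set z := m p q with hzdef
  have hzBinj : ∀ b ∈ B, m z b = 0 → b = 0 := by
    rcases hBmin (B ⊓ LinearMap.ker (m z)) inf_le_left (by
      rintro x hx y ⟨hy, hy2⟩
      refine ⟨hB x hx y hy, ?_⟩
      have hy2 : m z y = 0 := hy2
      show m z (m x y) = 0
      rw [hcomm z hz x hx y (hBA hy), hy2, map_zero]) with h | h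
    · intro b hb hb2
      have : b ∈ B ⊓ LinearMap.ker (m z) := ⟨hb, hb2⟩
      rw [h] at this; simpa using this
    · exfalso
      apply hzB
      intro b hb
      rw [← h] at hb
      exact hb.2
  let f : Module.End F L := m z
  have hfA : ∀ n, ∀ a ∈ A, (f ^ n) a ∈ A := by
    intro n
    induction n with
    | zero => intro a ha; simpa using ha
    | succ n ih => intro a ha; rw [pow_succ, Module.End.mul_apply]; exact ih _ (hI z a ha).1
  have hfcomm : ∀ n, ∀ w ∈ Z, ∀ a ∈ A, (f ^ n) (m w a) = m w ((f ^ n) a) := by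
    intro n w hw
    induction n with
    | zero => intro a ha; simp
    | succ n ih =>
      intro a ha
      rw [pow_succ, Module.End.mul_apply, Module.End.mul_apply]
      show (f ^ n) (m z (m w a)) = _
      rw [hcomm z hz w hw a ha, ih _ (hI z a ha).1]
  have hfs : ∀ n, ∀ a ∈ A, (f ^ n) a = 0 → ∀ s, (f ^ (n + 1)) (m s a) = 0 := by
    intro n
    induction n with
    | zero => intro a _ h s; simp only [pow_zero, Module.End.one_apply] at h; simp [h]
    | succ n ih =>
      intro a ha h s
      have h1 : (f ^ n) (m z a) = 0 := by
        rw [pow_succ, Module.End.mul_apply] at h; exact h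
      rw [pow_succ, Module.End.mul_apply]
      show (f ^ (n + 1)) (m z (m s a)) = 0
      rw [hswap, map_add, map_neg, ih _ (hI z a ha).1 h1 s,
        hfcomm _ _ (hZl s z hz) a ha, h]
      simp
  let A0 : Submodule F L :=
    { carrier := {a | a ∈ A ∧ ∃ n, (f ^ n) a = 0}
      zero_mem' := ⟨A.zero_mem, 0, by simp⟩
      add_mem' := by
        rintro a b ⟨ha, n, hn⟩ ⟨hb, k, hk⟩
        refine ⟨A.add_mem ha hb, n + k, ?_⟩
        rw [map_add]
        nth_rw 1 [add_comm n k]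
        rw [pow_add, pow_add, Module.End.mul_apply, Module.End.mul_apply, hn, hk]
        simp
      smul_mem' := by
        rintro c a ⟨ha, n, hn⟩
        exact ⟨A.smul_mem c ha, n, by rw [map_smul, hn, smul_zero]⟩ }
  have hinj : ∀ a ∈ A, ∀ n, (f ^ n) a = 0 → a = 0 := by
    rcases minIdeal_irred hm hA A0 (fun a ha => ha.1) (by
      rintro s a ⟨ha, n, hn⟩
      exact ⟨(hI s a ha).1, n + 1, hfs n a ha hn s⟩) with h | h
    · intro a ha n hn
      have : a ∈ A0 := ⟨ha, n, hn⟩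
      rw [h] at this; simpa using this
    · exfalso
      apply hB0
      rw [eq_bot_iff]
      intro b hb
      have : b ∈ A0 := h ▸ hBA hb
      obtain ⟨_, n, hn⟩ := this
      rw [Submodule.mem_bot]
      exact pow_inj (f := f) (hB z hz) hzBinj n b hb hn
  -- dimension count
  let g : (A × A) →ₗ[F] A :=
    LinearMap.codRestrict A
      (((m p) ∘ₗ A.subtype ∘ₗ LinearMap.snd F A A) +
        ((m.flip q) ∘ₗ A.subtype ∘ₗ LinearMap.fst F A A))
      (fun c => A.add_mem (hI p _ c.2.2).1 (hI q _ c.1.2).2)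
  have hpos : 0 < Module.finrank F A := by
    rw [Module.finrank_pos_iff]
    exact Submodule.nontrivial_iff_ne_bot.2 hA0
  obtain ⟨c, hc, hc0⟩ : ∃ c, c ∈ LinearMap.ker g ∧ c ≠ 0 := by
    apply Submodule.exists_mem_ne_zero_of_ne_bot
    apply LinearMap.ker_ne_bot_of_finrank_lt
    rw [Module.finrank_prod]; omega
  obtain ⟨⟨a, ha⟩, ⟨b, hb⟩⟩ := c
  have hc' : m p b + m a q = 0 := congrArg Subtype.val (LinearMap.mem_ker.1 hc)
  have hz2 : m (p + a) (q + b) = z := by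
    simp only [map_add, LinearMap.add_apply, hAA' a ha b hb, hzdef]
    have : m p q + m a q + (m p b + 0) = m p q + (m p b + m a q) := by abel
    rw [this, hc', add_zero]
  obtain ⟨n1, h1p, h1q⟩ := H p q
  obtain ⟨n2, h2p, h2q⟩ := H (p + a) (q + b)
  rw [hz2] at h2p h2q
  change (f ^ n1) p = 0 at h1p
  change (f ^ n1) q = 0 at h1q
  change (f ^ n2) (p + a) = 0 at h2p
  change (f ^ n2) (q + b) = 0 at h2q
  have fin : ∀ p a, a ∈ A → (f ^ n1) p = 0 → (f ^ n2) (p + a) = 0 → a = 0 := by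
    intro p a ha h1 h2
    apply hinj a ha (n1 + n2)
    have e1 : (f ^ (n1 + n2)) (p + a) = 0 := by
      rw [pow_add, Module.End.mul_apply, h2, map_zero]
    have e2 : (f ^ (n1 + n2)) p = 0 := by
      rw [add_comm, pow_add, Module.End.mul_apply, h1, map_zero]
    rw [map_add, e2, zero_add] at e1
    exact e1
  apply hc0
  have ha0 := fin p a ha h1p h2p
  have hb0 := fin q b hb h1q h2q
  subst ha0 hb0
  rfl

/-- Quotient multiplication. -/
def quotMul (m : L →ₗ[F] L →ₗ[F] L) (I : Submodule F L) (hI : IsIdeal m I) :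
    (L ⧸ I) →ₗ[F] (L ⧸ I) →ₗ[F] (L ⧸ I) :=
  I.liftQ
    { toFun := fun x => I.mapQ I (m x) (fun y hy => (hI x y hy).1)
      map_add' := by intro x y; ext t; simp
      map_smul' := by intro c x; ext t; simp }
    (by
      intro x hx
      rw [LinearMap.mem_ker]
      ext t
      simpa using (hI t x hx).2)

lemma quotMul_mk (I : Submodule F L) (hI : IsIdeal m I) (x y : L) :
    quotMul m I hI (I.mkQ x) (I.mkQ y) = I.mkQ (m x y) := rfl

lemma map_mprod (I : Submodule F L) (hI : IsIdeal m I) (P Q : Submodule F L) :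
    (mprod m P Q).map I.mkQ = mprod (quotMul m I hI) (P.map I.mkQ) (Q.map I.mkQ) := by
  apply le_antisymm
  · rw [Submodule.map_le_iff_le_comap]
    refine Submodule.map₂_le.2 fun p hp q hq => ?_
    rw [Submodule.mem_comap, ← quotMul_mk I hI]
    exact Submodule.apply_mem_map₂ _ (Submodule.mem_map_of_mem hp) (Submodule.mem_map_of_mem hq)
  · refine Submodule.map₂_le.2 ?_
    rintro _ ⟨p, hp, rfl⟩ _ ⟨q, hq, rfl⟩
    rw [quotMul_mk]
    exact Submodule.mem_map_of_mem (Submodule.apply_mem_map₂ _ hp hq)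

lemma map_derSeries (I : Submodule F L) (hI : IsIdeal m I) (S : Submodule F L) (n : ℕ) :
    (derSeries m S n).map I.mkQ = derSeries (quotMul m I hI) (S.map I.mkQ) n := by
  induction n with
  | zero => rfl
  | succ n ih => simp only [derSeries]; rw [map_mprod I hI, ih]

lemma map_lcSeries (I : Submodule F L) (hI : IsIdeal m I) (S : Submodule F L) (n : ℕ) :
    (lcSeries m S n).map I.mkQ = lcSeries (quotMul m I hI) (S.map I.mkQ) n := by
  induction n with
  | zero => rfl
  | succ n ih => simp only [lcSeries]; rw [map_mprod I hI, ih]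

end Helpers

theorem ss_of_H {F : Type*} [Field F] (d : ℕ) :
    ∀ {L : Type*} [AddCommGroup L] [Module F L] [FiniteDimensional F L]
    (m : L →ₗ[F] L →ₗ[F] L) (_ : IsLeibniz m) (_ : IsSolvableAlg m)
    (_ : ∀ p q : L, ∃ n : ℕ, ((m (m p q) : Module.End F L) ^ n) p = 0 ∧
      ((m (m p q) : Module.End F L) ^ n) q = 0) (_ : Module.finrank F L = d),
    IsStronglySolvable m (⊤ : Submodule F L) := by
  induction d using Nat.strong_induction_on with
  | _ d ih =>
  intro L _ _ _ m hm hsolv H hd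
  rcases subsingleton_or_nontrivial L with hL | hL
  · exact ⟨0, Subsingleton.elim _ _⟩
  obtain ⟨A, hA⟩ := exists_minIdeal m
  have hI := hA.1
  have htop : (⊤ : Submodule F L).map A.mkQ = ⊤ := by
    rw [Submodule.map_top, Submodule.range_mkQ]
  have hlt : Module.finrank F (L ⧸ A) < d := by
    have h1 := Submodule.finrank_quotient_add_finrank A
    have hpos : 0 < Module.finrank F A := by
      rw [Module.finrank_pos_iff]
      exact Submodule.nontrivial_iff_ne_bot.2 hA.2.1
    omega
  have hss := ih _ hlt (quotMul m A hI) (by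
      intro a b c
      obtain ⟨a, rfl⟩ := A.mkQ_surjective a
      obtain ⟨b, rfl⟩ := A.mkQ_surjective b
      obtain ⟨c, rfl⟩ := A.mkQ_surjective c
      simp only [quotMul_mk]
      rw [hm a b c, map_add])
    (by
      obtain ⟨n, hn⟩ := hsolv
      refine ⟨n, ?_⟩
      rw [← htop, ← map_derSeries, hn, Submodule.map_bot])
    (by
      intro p q
      obtain ⟨p, rfl⟩ := A.mkQ_surjective p
      obtain ⟨q, rfl⟩ := A.mkQ_surjective q
      obtain ⟨n, h1, h2⟩ := H p q
      have key : ∀ n x, ((quotMul m A hI (A.mkQ (m p q)) : Module.End F (L ⧸ A)) ^ n) (A.mkQ x)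
          = A.mkQ (((m (m p q) : Module.End F L) ^ n) x) := by
        intro n
        induction n with
        | zero => intro x; simp
        | succ n ih =>
          intro x
          rw [pow_succ, pow_succ, Module.End.mul_apply, Module.End.mul_apply, quotMul_mk, ih]
      refine ⟨n, ?_, ?_⟩
      · rw [quotMul_mk, key, h1, map_zero]
      · rw [quotMul_mk, key, h2, map_zero])
    rfl
  obtain ⟨k, hk⟩ := hss
  refine core hm hsolv H hA (k := k) ?_
  rw [← htop, ← map_mprod, ← map_lcSeries] at hk
  intro x hx
  have hx2 := Submodule.mem_map_of_mem (f := A.mkQ) hx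
  rw [hk, Submodule.mem_bot] at hx2
  simpa using hx2

/-- A finite-dimensional solvable Leibniz algebra that is minimally
non-strongly-solvable (not strongly solvable, but every proper subalgebra is strongly
solvable) is two-generated. -/
theorem minimally_non_strongly_solvable_two_generated
    {F : Type*} [Field F] {L : Type*} [AddCommGroup L] [Module F L]
    [FiniteDimensional F L]
    (m : L →ₗ[F] L →ₗ[F] L) (hm : IsLeibniz m)
    (hsolv : IsSolvableAlg m)
    (hnotss : ¬ IsStronglySolvable m (⊤ : Submodule F L))
    (hproper : ∀ S : Submodule F L, IsSubalg m S → S ≠ ⊤ → IsStronglySolvable m S) :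
    ∃ x y : L, genBy m {x, y} = ⊤ := by
  by_contra! hcon
  apply hnotss
  refine ss_of_H _ m hm hsolv ?_ rfl
  intro p q
  let S := genBy m {p, q}
  have hS : IsSubalg m S := by
    intro x hx y hy
    refine Submodule.mem_sInf.2 fun T hT => ?_
    exact hT.1 x (Submodule.mem_sInf.1 hx T hT) y (Submodule.mem_sInf.1 hy T hT)
  have hp : p ∈ S := Submodule.mem_sInf.2 fun T hT => hT.2 (by simp)
  have hq : q ∈ S := Submodule.mem_sInf.2 fun T hT => hT.2 (by simp)
  obtain ⟨k, hk⟩ := hproper S hS (hcon p q)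
  have hz : m p q ∈ mprod m S S := Submodule.apply_mem_map₂ m hp hq
  have key : ∀ n, ∀ x ∈ S,
      ((m (m p q) : Module.End F L) ^ (n + 1)) x ∈ lcSeries m (mprod m S S) n := by
    intro n x hx
    induction n with
    | zero =>
      rw [zero_add, pow_one]
      exact Submodule.apply_mem_map₂ m (hS p hp q hq) hx
    | succ n ih =>
      rw [pow_succ', Module.End.mul_apply]
      exact Submodule.apply_mem_map₂ m hz ih
  refine ⟨k + 1, ?_, ?_⟩
  · have := key k p hp
    rwa [hk, Submodule.mem_bot] at this
  · have := key k q hq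
    rwa [hk, Submodule.mem_bot] at this
end

section
/- Let L be a finite-dimensional solvable Leibniz algebra over a field F such that every two-generated proper subalgebra of L is strongly solvable. Then every proper subalgebra of L is strongly solvable. -/
/-!
Basic theory of (left) Leibniz algebras, formalized over an arbitrary field `F`.
A Leibniz algebra structure on an `F`-vector space `L` is given by a bilinear
multiplication `m : L →ₗ[F] L →ₗ[F] L` satisfying the left Leibniz identity.
-/

open Submodule Module

section Aux

universe u v
variable {F : Type u} [Field F] {L : Type v} [AddCommGroup L] [Module F L]
variable {L' : Type*} [AddCommGroup L'] [Module F L']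

lemma aux_map_mprod (m : L →ₗ[F] L →ₗ[F] L) (m' : L' →ₗ[F] L' →ₗ[F] L') (f : L →ₗ[F] L')
    (hf : ∀ x y, f (m x y) = m' (f x) (f y)) (P Q : Submodule F L) :
    (mprod m P Q).map f = mprod m' (P.map f) (Q.map f) := by
  apply le_antisymm
  · rw [Submodule.map_le_iff_le_comap, Submodule.map₂_le]
    intro x hx y hy
    rw [Submodule.mem_comap, hf]
    exact Submodule.apply_mem_map₂ _ (Submodule.mem_map_of_mem hx) (Submodule.mem_map_of_mem hy)
  · rw [Submodule.map₂_le]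
    rintro _ ⟨x, hx, rfl⟩ _ ⟨y, hy, rfl⟩
    rw [← hf]
    exact Submodule.mem_map_of_mem (Submodule.apply_mem_map₂ _ hx hy)

lemma aux_map_lc (m : L →ₗ[F] L →ₗ[F] L) (m' : L' →ₗ[F] L' →ₗ[F] L') (f : L →ₗ[F] L')
    (hf : ∀ x y, f (m x y) = m' (f x) (f y)) (N : Submodule F L) (k : ℕ) :
    (lcSeries m N k).map f = lcSeries m' (N.map f) k := by
  induction k with
  | zero => rfl
  | succ k ih =>
    change (mprod m N (lcSeries m N k)).map f = mprod m' _ _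
    rw [aux_map_mprod m m' f hf, ih]

lemma aux_map_der (m : L →ₗ[F] L →ₗ[F] L) (m' : L' →ₗ[F] L' →ₗ[F] L') (f : L →ₗ[F] L')
    (hf : ∀ x y, f (m x y) = m' (f x) (f y)) (N : Submodule F L) (k : ℕ) :
    (derSeries m N k).map f = derSeries m' (N.map f) k := by
  induction k with
  | zero => rfl
  | succ k ih =>
    change (mprod m (derSeries m N k) (derSeries m N k)).map f = mprod m' _ _
    rw [aux_map_mprod m m' f hf, ih]

lemma aux_gen_subalg (m : L →ₗ[F] L →ₗ[F] L) (s : Set L) : IsSubalg m (genBy m s) := by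
  intro x hx y hy
  unfold genBy at *
  rw [Submodule.mem_sInf] at *
  intro S hS
  exact hS.1 x (hx S hS) y (hy S hS)

lemma aux_gen_subset (m : L →ₗ[F] L →ₗ[F] L) (s : Set L) : s ⊆ genBy m s := by
  intro x hx
  change x ∈ genBy m s
  unfold genBy
  rw [Submodule.mem_sInf]
  intro S hS
  exact hS.2 hx

lemma aux_gen_le (m : L →ₗ[F] L →ₗ[F] L) (s : Set L) (S : Submodule F L)
    (h : IsSubalg m S) (hs : s ⊆ S) : genBy m s ≤ S := sInf_le ⟨h, hs⟩

lemma aux_map_gen (m : L →ₗ[F] L →ₗ[F] L) (m' : L' →ₗ[F] L' →ₗ[F] L') (f : L →ₗ[F] L')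
    (hf : ∀ x y, f (m x y) = m' (f x) (f y)) (s : Set L) :
    (genBy m s).map f = genBy m' (f '' s) := by
  apply le_antisymm
  · rw [Submodule.map_le_iff_le_comap]
    apply aux_gen_le
    · intro x hx y hy
      rw [Submodule.mem_comap, hf]
      exact aux_gen_subalg m' _ _ hx _ hy
    · intro x hx
      exact aux_gen_subset m' _ ⟨x, hx, rfl⟩
  · apply aux_gen_le
    · rintro _ ⟨x, hx, rfl⟩ _ ⟨y, hy, rfl⟩
      rw [← hf]
      exact Submodule.mem_map_of_mem (aux_gen_subalg m _ _ hx _ hy)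
    · rintro _ ⟨x, hx, rfl⟩
      exact Submodule.mem_map_of_mem (aux_gen_subset m _ hx)

lemma aux_ss_map (m : L →ₗ[F] L →ₗ[F] L) (m' : L' →ₗ[F] L' →ₗ[F] L') (f : L →ₗ[F] L')
    (hf : ∀ x y, f (m x y) = m' (f x) (f y)) (S : Submodule F L)
    (h : IsStronglySolvable m S) : IsStronglySolvable m' (S.map f) := by
  obtain ⟨k, hk⟩ := h
  refine ⟨k, ?_⟩
  rw [← aux_map_mprod m m' f hf, ← aux_map_lc m m' f hf, hk, Submodule.map_bot]

lemma aux_ss_of_map (m : L →ₗ[F] L →ₗ[F] L) (m' : L' →ₗ[F] L' →ₗ[F] L') (f : L →ₗ[F] L')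
    (hf : ∀ x y, f (m x y) = m' (f x) (f y)) (S : Submodule F L)
    (h : IsStronglySolvable m' (S.map f)) :
    ∃ k, lcSeries m (mprod m S S) k ≤ LinearMap.ker f := by
  obtain ⟨k, hk⟩ := h
  refine ⟨k, ?_⟩
  rw [← aux_map_mprod m m' f hf, ← aux_map_lc m m' f hf] at hk
  exact LinearMap.le_ker_iff_map.2 hk

/-- Descended multiplication on the quotient by an ideal. -/
lemma aux_quot (m : L →ₗ[F] L →ₗ[F] L) (A : Submodule F L) (hA : IsIdeal m A) :
    ∃ m' : (L ⧸ A) →ₗ[F] (L ⧸ A) →ₗ[F] (L ⧸ A),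
      ∀ x y, A.mkQ (m x y) = m' (A.mkQ x) (A.mkQ y) := by
  let g : L →ₗ[F] (L ⧸ A) →ₗ[F] (L ⧸ A) :=
    { toFun := fun x => A.mapQ A (m x) (fun y hy => (hA x y hy).1)
      map_add' := by
        intro x y
        apply Submodule.linearMap_qext
        ext z
        simp
      map_smul' := by
        intro r x
        apply Submodule.linearMap_qext
        ext z
        simp }
  refine ⟨A.liftQ g ?_, ?_⟩
  · intro x hx
    rw [LinearMap.mem_ker]
    apply Submodule.linearMap_qext
    ext z
    simpa [g] using (hA z x hx).2
  · intro x y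
    simp [g]

lemma aux_lc_le (m : L →ₗ[F] L →ₗ[F] L) (k : ℕ) :
    lcSeries m (mprod m ⊤ ⊤) k ≤ mprod m ⊤ ⊤ := by
  cases k with
  | zero => exact le_rfl
  | succ k => exact Submodule.map₂_le_map₂ le_top le_top

lemma aux_lc_left (m : L →ₗ[F] L →ₗ[F] L) (hm : IsLeibniz m) (k : ℕ) (s : L) :
    ∀ z ∈ lcSeries m (mprod m ⊤ ⊤) k, m s z ∈ lcSeries m (mprod m ⊤ ⊤) k := by
  induction k with
  | zero => exact fun z _ => Submodule.apply_mem_map₂ _ trivial trivial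
  | succ k ih =>
    change mprod m (mprod m ⊤ ⊤) (lcSeries m (mprod m ⊤ ⊤) k) ≤
      (mprod m (mprod m ⊤ ⊤) (lcSeries m (mprod m ⊤ ⊤) k)).comap (m s)
    rw [Submodule.map₂_le]
    intro a ha b hb
    rw [Submodule.mem_comap, hm]
    exact add_mem
      (Submodule.apply_mem_map₂ _ (Submodule.apply_mem_map₂ _ trivial trivial) hb)
      (Submodule.apply_mem_map₂ _ ha (ih b hb))

lemma aux_pow_lc (m : L →ₗ[F] L →ₗ[F] L) (S : Submodule F L) (c : L)
    (hc : c ∈ S) (hc2 : c ∈ mprod m S S) (k : ℕ) (t : L) (ht : t ∈ S) :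
    ((m c : Module.End F L) ^ (k + 1)) t ∈ lcSeries m (mprod m S S) k := by
  induction k with
  | zero =>
    rw [zero_add, pow_one]
    exact Submodule.apply_mem_map₂ _ hc ht
  | succ k ih =>
    rw [pow_succ', Module.End.mul_apply]
    exact Submodule.apply_mem_map₂ _ hc2 ih

/-- The generators of each term of the lower central series of `L²` are products. -/
lemma aux_lc_gen (m : L →ₗ[F] L →ₗ[F] L) (k : ℕ) (W : Submodule F L)
    (h : ∀ x y, m x y ∈ lcSeries m (mprod m ⊤ ⊤) k → m x y ∈ W) :
    lcSeries m (mprod m ⊤ ⊤) k ≤ W := by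
  cases k with
  | zero =>
    refine Submodule.map₂_le.2 fun x hx y hy => h x y (Submodule.apply_mem_map₂ _ hx hy)
  | succ k =>
    refine Submodule.map₂_le.2 fun x hx y hy => h x y (Submodule.apply_mem_map₂ _ hx hy)

lemma aux_abelian (m : L →ₗ[F] L →ₗ[F] L) (hm : IsLeibniz m) (hsolv : IsSolvableAlg m)
    (A : Submodule F L) (hA : IsMinIdeal m A) : ∀ a ∈ A, ∀ b ∈ A, m a b = 0 := by
  have hI : IsIdeal m (mprod m A A) := by
    intro x
    have h1 : mprod m A A ≤ (mprod m A A).comap (m x) := by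
      rw [Submodule.map₂_le]
      intro a ha b hb
      rw [Submodule.mem_comap, hm]
      exact add_mem (Submodule.apply_mem_map₂ _ (hA.1 x a ha).1 hb)
        (Submodule.apply_mem_map₂ _ ha (hA.1 x b hb).1)
    have h2 : mprod m A A ≤ (mprod m A A).comap (m.flip x) := by
      rw [Submodule.map₂_le]
      intro a ha b hb
      rw [Submodule.mem_comap, LinearMap.flip_apply, eq_sub_of_add_eq (hm a b x).symm]
      exact sub_mem (Submodule.apply_mem_map₂ _ ha (hA.1 x b hb).2)
        (Submodule.apply_mem_map₂ _ hb (hA.1 x a ha).2)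
    exact fun y hy => ⟨h1 hy, h2 hy⟩
  have hle : mprod m A A ≤ A := Submodule.map₂_le.2 fun a _ b hb => (hA.1 a b hb).1
  rcases hA.2.2 _ hI hle with h | h
  · intro a ha b hb
    rw [← Submodule.mem_bot F, ← h]
    exact Submodule.apply_mem_map₂ _ ha hb
  · exfalso
    obtain ⟨n, hn⟩ := hsolv
    have : ∀ n, A ≤ derSeries m ⊤ n := by
      intro n
      induction n with
      | zero => exact le_top
      | succ n ih =>
        rw [← h]
        exact Submodule.map₂_le_map₂ ih ih
    exact hA.2.1 (le_bot_iff.1 (hn ▸ this n))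

/-- A minimal ideal is either antisymmetric or annihilated on the right. -/
lemma aux_dichotomy (m : L →ₗ[F] L →ₗ[F] L) (hm : IsLeibniz m)
    (A : Submodule F L) (hA : IsMinIdeal m A) :
    (∀ a ∈ A, ∀ s, m a s = 0) ∨ (∀ a ∈ A, ∀ s, m a s = - m s a) := by
  let K : Submodule F L := mprod (m + m.flip) ⊤ A
  have hz : ∀ a b c, m (m a b + m b a) c = 0 := by
    intro a b c
    have h1 := hm a b c
    have h2 := hm b a c
    rw [map_add, LinearMap.add_apply, eq_sub_of_add_eq h1.symm, eq_sub_of_add_eq h2.symm]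
    abel
  have hK0 : ∀ t, ∀ k ∈ K, m k t = 0 := by
    intro t
    have : K ≤ LinearMap.ker (m.flip t) := by
      refine Submodule.map₂_le.2 fun s _ a _ => ?_
      rw [LinearMap.mem_ker, LinearMap.flip_apply]
      exact hz s a t
    exact fun k hk => this hk
  have hK : IsIdeal m K := by
    intro x y hy
    refine ⟨?_, by rw [hK0 x y hy]; exact zero_mem _⟩
    have : K ≤ K.comap (m x) := by
      refine Submodule.map₂_le.2 fun s _ a ha => ?_
      rw [Submodule.mem_comap]
      have : m x ((m + m.flip) s a) = (m + m.flip) (m x s) a + (m + m.flip) s (m x a) := by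
        simp only [LinearMap.add_apply, LinearMap.flip_apply, map_add]
        rw [hm x s a, hm x a s]
        abel
      rw [this]
      exact add_mem (Submodule.apply_mem_map₂ _ trivial ha)
        (Submodule.apply_mem_map₂ _ trivial (hA.1 x a ha).1)
    exact this hy
  have hle : K ≤ A := by
    refine Submodule.map₂_le.2 fun s _ a ha => ?_
    exact add_mem (hA.1 s a ha).1 (hA.1 s a ha).2
  rcases hA.2.2 K hK hle with h | h
  · right
    intro a ha s
    have : (m + m.flip) s a ∈ K := Submodule.apply_mem_map₂ _ trivial ha
    rw [h, Submodule.mem_bot] at this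
    simp only [LinearMap.add_apply, LinearMap.flip_apply] at this
    rw [add_comm] at this
    exact eq_neg_of_add_eq_zero_left this
  · left
    intro a ha s
    exact hK0 s a (h ▸ ha)

/-- The auxiliary operators measuring the change of iterated products. -/
def auxP (m : L →ₗ[F] L →ₗ[F] L) (c u : L) : ℕ → Module.End F L
  | 0 => 0
  | k + 1 => (m c) * auxP m c u k - m (((m c : Module.End F L) ^ k) u)

lemma auxP_mem (m : L →ₗ[F] L →ₗ[F] L) (A : Submodule F L) (hA : IsIdeal m A) (c u : L) (k : ℕ) :
    ∀ a ∈ A, auxP m c u k a ∈ A := by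
  induction k with
  | zero => intro a _; exact zero_mem _
  | succ k ih =>
    intro a ha
    exact sub_mem (hA c _ (ih a ha)).1 (hA _ a ha).1

lemma auxP_spec (m : L →ₗ[F] L →ₗ[F] L) (A : Submodule F L) (hA : IsIdeal m A)
    (hab : ∀ a ∈ A, ∀ b ∈ A, m a b = 0) (hs : ∀ a ∈ A, ∀ s, m a s = - m s a)
    (c u d : L) (hd : d ∈ A) (k : ℕ) :
    ((m (c + d) : Module.End F L) ^ k) u = ((m c : Module.End F L) ^ k) u + auxP m c u k d := by
  induction k with
  | zero => simp [auxP]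
  | succ k ih =>
    rw [pow_succ', Module.End.mul_apply, ih, pow_succ', Module.End.mul_apply]
    simp only [auxP, LinearMap.sub_apply, Module.End.mul_apply, map_add, LinearMap.add_apply]
    rw [hab d hd _ (auxP_mem m A hA c u k d hd), hs d hd]
    abel

/-- The core step. -/
lemma aux_core [FiniteDimensional F L] (m : L →ₗ[F] L →ₗ[F] L) (hm : IsLeibniz m)
    (hsolv : IsSolvableAlg m) (h2 : ∀ x y, IsStronglySolvable m (genBy m {x, y}))
    (A : Submodule F L) (hA : IsMinIdeal m A)
    (k : ℕ) (hk : lcSeries m (mprod m ⊤ ⊤) k ≤ A) : IsStronglySolvable m ⊤ := by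
  classical
  have hab := aux_abelian m hm hsolv A hA
  have hdi := aux_dichotomy m hm A hA
  -- left stable subspaces of `A` are trivial
  have hirr : ∀ W : Submodule F L, W ≤ A → (∀ s, ∀ w ∈ W, m s w ∈ W) → W = ⊥ ∨ W = A := by
    intro W hW hst
    refine hA.2.2 W (fun x y hy => ⟨hst x y hy, ?_⟩) hW
    rcases hdi with h | h
    · rw [h y (hW hy)]; exact zero_mem _
    · rw [h y (hW hy)]; exact neg_mem (hst x y hy)
  by_contra hns
  let N : Submodule F L := mprod m ⊤ ⊤
  -- least index for which the lower central series acts trivially on `A`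
  have hex : ∃ j, ∀ z ∈ lcSeries m N j, ∀ a ∈ A, m z a = 0 :=
    ⟨k, fun z hz a ha => hab z (hk hz) a ha⟩
  obtain ⟨j, hj, hjmin⟩ : ∃ j, (∀ z ∈ lcSeries m N j, ∀ a ∈ A, m z a = 0) ∧
      ∀ i < j, ¬ ∀ z ∈ lcSeries m N i, ∀ a ∈ A, m z a = 0 :=
    ⟨Nat.find hex, Nat.find_spec hex, fun i hi => Nat.find_min hex hi⟩
  cases j with
  | zero =>
    apply hns
    refine ⟨k + 1, ?_⟩
    rw [eq_bot_iff]
    refine Submodule.map₂_le.2 fun n hn a ha => ?_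
    exact (Submodule.mem_bot F).2 (hj n hn a (hk ha))
  | succ j =>
  have hnt := hjmin j (Nat.lt_succ_self j)
  let Z : Submodule F L := lcSeries m N j
  have hZN : Z ≤ N := aux_lc_le m j
  have hZl : ∀ s, ∀ z ∈ Z, m s z ∈ Z := fun s => aux_lc_left m hm j s
  have hcomm : ∀ n ∈ N, ∀ z ∈ Z, ∀ a ∈ A, m n (m z a) = m z (m n a) := by
    intro n hn z hz a ha
    rw [hm n z a, hj (m n z) (Submodule.apply_mem_map₂ _ hn hz) a ha, zero_add]
  -- invariants of `Z` vanish
  have hinv : ∀ a ∈ A, (∀ z ∈ Z, m z a = 0) → a = 0 := by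
    let W : Submodule F L :=
      { carrier := {a | a ∈ A ∧ ∀ z ∈ Z, m z a = 0}
        add_mem' := by
          rintro a b ⟨ha, ha'⟩ ⟨hb, hb'⟩
          exact ⟨add_mem ha hb, fun z hz => by rw [map_add, ha' z hz, hb' z hz, add_zero]⟩
        zero_mem' := ⟨zero_mem _, fun z _ => map_zero _⟩
        smul_mem' := by
          rintro r a ⟨ha, ha'⟩
          exact ⟨A.smul_mem r ha, fun z hz => by rw [map_smul, ha' z hz, smul_zero]⟩ }
    rcases hirr W (fun a ha => ha.1) (by
      rintro s w ⟨hw, hw'⟩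
      refine ⟨(hA.1 s w hw).1, fun z hz => ?_⟩
      have := hm s z w
      rw [hw' z hz, hw' _ (hZl s z hz), map_zero, zero_add] at this
      exact this.symm) with h | h
    · intro a ha ha'
      rw [← Submodule.mem_bot F, ← h]
      exact ⟨ha, ha'⟩
    · exfalso
      apply hnt
      intro z hz a ha
      rw [← h] at ha
      exact ha.2 z hz
  -- minimal nonzero `Z`-stable subspace
  obtain ⟨W, ⟨hWA, hW0, hWZ⟩, hWmin⟩ := (wellFounded_lt (α := Submodule F L)).has_min
    {W | W ≤ A ∧ W ≠ ⊥ ∧ ∀ z ∈ Z, ∀ w ∈ W, m z w ∈ W}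
    ⟨A, le_rfl, hA.2.1, fun z _ w hw => (hA.1 z w hw).1⟩
  obtain ⟨x, y, hcZ, hcinjW⟩ : ∃ x y, m x y ∈ Z ∧ ∀ w ∈ W, m (m x y) w = 0 → w = 0 := by
    by_contra hcon
    push Not at hcon
    obtain ⟨w0, hw0, hw0ne⟩ := Submodule.exists_mem_ne_zero_of_ne_bot hW0
    apply hw0ne
    apply hinv w0 (hWA hw0)
    have : Z ≤ LinearMap.ker (m.flip w0) := by
      apply aux_lc_gen
      intro x y hxy
      obtain ⟨w, hw, hw', hwne⟩ := hcon x y hxy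
      rw [LinearMap.mem_ker, LinearMap.flip_apply]
      by_contra hne
      refine hWmin (W ⊓ LinearMap.ker (m (m x y))) ⟨inf_le_left.trans hWA, ?_, ?_⟩ ?_
      · intro hb
        apply hwne
        rw [← Submodule.mem_bot F, ← hb]
        exact ⟨hw, hw'⟩
      · rintro z hz v ⟨hv, hv'⟩
        refine ⟨hWZ z hz v hv, ?_⟩
        rw [SetLike.mem_coe, LinearMap.mem_ker] at hv' ⊢
        rw [hcomm _ (hZN hxy) z hz v (hWA hv), hv', map_zero]
      · refine lt_of_le_of_ne inf_le_left fun he => hne ?_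
        rw [← he] at hw0
        exact hw0.2
    exact fun z hz => this hz
  set c := m x y with hc
  have hpowA : ∀ n, ∀ a ∈ A, ((m c : Module.End F L) ^ n) a ∈ A := by
    intro n
    induction n with
    | zero => intro a ha; simpa using ha
    | succ n ih =>
      intro a ha
      rw [pow_succ', Module.End.mul_apply]
      exact (hA.1 c _ (ih a ha)).1
  have hpowcomm : ∀ n, ∀ z ∈ Z, ∀ a ∈ A,
      ((m c : Module.End F L) ^ n) (m z a) = m z (((m c : Module.End F L) ^ n) a) := by
    intro n z hz
    induction n with
    | zero => intro a _; simp
    | succ n ih =>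
      intro a ha
      rw [pow_succ', Module.End.mul_apply, ih a ha, hcomm c (hZN hcZ) z hz _ (hpowA n a ha),
        Module.End.mul_apply]
  have hfit : ∀ n, ∀ a ∈ A, ∀ s, ((m c : Module.End F L) ^ n) a = 0 →
      ((m c : Module.End F L) ^ (n + 1)) (m s a) = 0 := by
    intro n
    induction n with
    | zero =>
      intro a _ s h
      rw [pow_zero, Module.End.one_apply] at h
      rw [h, map_zero, map_zero]
    | succ n ih =>
      intro a ha s h
      have e : m c (m s a) = m s (m c a) - m (m s c) a := by
        rw [hm s c a]; abel
      rw [pow_succ, Module.End.mul_apply, e, map_sub,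
        ih (m c a) (hA.1 c a ha).1 s (by rw [pow_succ, Module.End.mul_apply] at h; exact h),
        hpowcomm _ _ (hZl s c hcZ) a ha, h, map_zero, sub_zero]
  -- `c` is injective on `A`
  have hinj : ∀ a ∈ A, m c a = 0 → a = 0 := by
    let K : Submodule F L :=
      { carrier := {a | a ∈ A ∧ ∃ n, ((m c : Module.End F L) ^ n) a = 0}
        add_mem' := by
          rintro a b ⟨ha, n, ha'⟩ ⟨hb, p, hb'⟩
          refine ⟨add_mem ha hb, p + n, ?_⟩
          rw [map_add, pow_add, Module.End.mul_apply, ha', map_zero, ← pow_add, add_comm p n,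
            pow_add, Module.End.mul_apply, hb', map_zero, add_zero]
        zero_mem' := ⟨zero_mem _, 0, map_zero _⟩
        smul_mem' := by
          rintro r a ⟨ha, n, ha'⟩
          exact ⟨A.smul_mem r ha, n, by rw [map_smul, ha', smul_zero]⟩ }
    rcases hirr K (fun a ha => ha.1) (by
      rintro s w ⟨hw, n, hw'⟩
      exact ⟨(hA.1 s w hw).1, n + 1, hfit n w hw s hw'⟩) with h | h
    · intro a ha ha'
      rw [← Submodule.mem_bot F, ← h]
      exact ⟨ha, 1, by rw [pow_one]; exact ha'⟩
    · exfalso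
      obtain ⟨w0, hw0, hw0ne⟩ := Submodule.exists_mem_ne_zero_of_ne_bot hW0
      have hw0A := hWA hw0
      rw [← h] at hw0A
      obtain ⟨-, n, hn⟩ := hw0A
      have key : ∀ n, ∀ w ∈ W, ((m c : Module.End F L) ^ n) w = 0 → w = 0 := by
        intro n
        induction n with
        | zero => intro w _ h; simpa using h
        | succ n ih =>
          intro w hw h
          rw [pow_succ, Module.End.mul_apply] at h
          exact hcinjW w hw (ih _ (hWZ c hcZ w hw) h)
      exact hw0ne (key n w0 hw0 hn)
  have hinjpow : ∀ n, ∀ a ∈ A, ((m c : Module.End F L) ^ n) a = 0 → a = 0 := by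
    intro n
    induction n with
    | zero => intro w _ h; simpa using h
    | succ n ih =>
      intro w hw h
      rw [pow_succ, Module.End.mul_apply] at h
      exact hinj w hw (ih _ (hA.1 c w hw).1 h)
  -- `c + d` acts on `A` as `c`
  have hcd : ∀ d ∈ A, ∀ n, ∀ a ∈ A,
      ((m (c + d) : Module.End F L) ^ n) a = ((m c : Module.End F L) ^ n) a := by
    intro d hd n a ha
    induction n with
    | zero => simp
    | succ n ih =>
      rw [pow_succ', Module.End.mul_apply, ih, pow_succ', Module.End.mul_apply, map_add,
        LinearMap.add_apply, hab d hd _ (hpowA n a ha), add_zero]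
  -- the crucial vanishing
  have hvan : ∀ x' y' d, d ∈ A → m x' y' = c + d →
      ((m (c + d) : Module.End F L) ^ (k + 1)) x' = 0 := by
    intro x' y' d hd he
    set T := genBy m {x', y'} with hT
    have hTs : IsSubalg m T := aux_gen_subalg m _
    have hxT : x' ∈ T := aux_gen_subset m _ (by simp)
    have hyT : y' ∈ T := aux_gen_subset m _ (by simp)
    have hcT : c + d ∈ T := he ▸ hTs _ hxT _ hyT
    have hcT2 : c + d ∈ mprod m T T := he ▸ Submodule.apply_mem_map₂ _ hxT hyT
    have hcN : c + d ∈ mprod m ⊤ ⊤ := he ▸ Submodule.apply_mem_map₂ _ trivial trivial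
    have hTA : ∀ t ∈ T, t ∈ A → t = 0 := by
      intro t ht htA
      obtain ⟨p, hp⟩ := h2 x' y'
      have := aux_pow_lc m T (c + d) hcT hcT2 p t ht
      rw [hp, Submodule.mem_bot, hcd d hd _ t htA] at this
      exact hinjpow _ t htA this
    apply hTA
    · generalize k + 1 = n
      induction n with
      | zero => simpa using hxT
      | succ n ih =>
        rw [pow_succ', Module.End.mul_apply]
        exact hTs _ hcT _ ih
    · exact hk (aux_pow_lc m ⊤ (c + d) trivial hcN k x' trivial)
  have h0 : ((m c : Module.End F L) ^ (k + 1)) x = 0 := by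
    have := hvan x y 0 (zero_mem _) (by rw [add_zero])
    rwa [add_zero] at this
  obtain ⟨a0, ha0, ha0ne⟩ := Submodule.exists_mem_ne_zero_of_ne_bot hA.2.1
  rcases hdi with hr | hr
  · have := hvan (x + a0) y 0 (zero_mem _) (by
      rw [map_add, LinearMap.add_apply, hr a0 ha0 y])
    rw [add_zero, map_add, h0, zero_add] at this
    exact ha0ne (hinjpow _ a0 ha0 this)
  · have hb : ∀ b ∈ A, auxP m c x (k + 1) (m x b) = 0 := by
      intro b hb
      have hd := (hA.1 x b hb).1
      have := hvan x (y + b) (m x b) hd (by rw [map_add])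
      rwa [auxP_spec m A hA.1 hab hr c x _ hd, h0, zero_add] at this
    have ha : ∀ a ∈ A, auxP m c x (k + 1) (m y a) = ((m c : Module.End F L) ^ (k + 1)) a := by
      intro a ha
      have hd : - m y a ∈ A := neg_mem (hA.1 y a ha).1
      have := hvan (x + a) y (- m y a) hd (by rw [map_add, LinearMap.add_apply, hr a ha y])
      rw [map_add, hcd _ hd _ a ha, auxP_spec m A hA.1 hab hr c x _ hd, h0, zero_add,
        map_neg, neg_add_eq_zero] at this
      exact this
    have hysurj : ∀ w ∈ A, ∃ a ∈ A, m y a = w := by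
      let g : A →ₗ[F] A := (m y).restrict (fun a ha => (hA.1 y a ha).1)
      have hg : Function.Injective g := by
        rw [injective_iff_map_eq_zero]
        intro a hga
        have h1 : m y a = 0 := congrArg Subtype.val hga
        have h3 := ha a a.2
        rw [h1, map_zero] at h3
        exact Subtype.ext (hinjpow _ a a.2 h3.symm)
      intro w hw
      obtain ⟨a, ha⟩ := LinearMap.injective_iff_surjective.1 hg ⟨w, hw⟩
      exact ⟨a, a.2, congrArg Subtype.val ha⟩
    have hx0 : ∀ b ∈ A, m x b = 0 := by
      intro b hbA
      obtain ⟨a, haA, he⟩ := hysurj _ (hA.1 x b hbA).1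
      have h3 := hb b hbA
      rw [← he, ha a haA] at h3
      rw [← he, hinjpow _ a haA h3, map_zero]
    apply ha0ne
    apply hinj a0 ha0
    have := hm x y a0
    rw [hx0 a0 ha0, hx0 _ (hA.1 y a0 ha0).1, map_zero, add_zero] at this
    exact this.symm

lemma aux_main (n : ℕ) : ∀ (L : Type v) [AddCommGroup L] [Module F L] [FiniteDimensional F L]
    (m : L →ₗ[F] L →ₗ[F] L), finrank F L = n → IsLeibniz m → IsSolvableAlg m →
    (∀ x y, IsStronglySolvable m (genBy m {x, y})) → IsStronglySolvable m ⊤ := by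
  induction n using Nat.strong_induction_on with
  | _ n ih =>
  intro L _ _ _ m hn hm hsolv h2
  by_cases htop : (⊤ : Submodule F L) = ⊥
  · refine ⟨0, ?_⟩
    rw [eq_bot_iff, ← htop]
    exact le_top
  obtain ⟨A, ⟨hAI, hA0⟩, hAmin⟩ := (wellFounded_lt (α := Submodule F L)).has_min
    {A | IsIdeal m A ∧ A ≠ ⊥} ⟨⊤, fun _ _ _ => ⟨trivial, trivial⟩, htop⟩
  have hA : IsMinIdeal m A := by
    refine ⟨hAI, hA0, fun J hJ hle => ?_⟩
    by_contra hcon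
    push Not at hcon
    exact hAmin J ⟨hJ, hcon.1⟩ (lt_of_le_of_ne hle hcon.2)
  obtain ⟨m', hm'⟩ := aux_quot m A hAI
  have hsur : Function.Surjective A.mkQ := A.mkQ_surjective
  have hmaptop : (⊤ : Submodule F L).map A.mkQ = ⊤ := by
    rw [Submodule.map_top, Submodule.range_mkQ]
  have hlt : finrank F (L ⧸ A) < n := by
    have h1 := A.finrank_quotient_add_finrank
    have h3 : 0 < finrank F A := by
      rw [Nat.pos_iff_ne_zero]
      intro h
      exact hA0 (Submodule.finrank_eq_zero.1 h)
    omega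
  have hq : IsStronglySolvable m' ⊤ := by
    refine ih _ hlt (L ⧸ A) m' rfl ?_ ?_ ?_
    · intro a b c
      obtain ⟨a, rfl⟩ := hsur a
      obtain ⟨b, rfl⟩ := hsur b
      obtain ⟨c, rfl⟩ := hsur c
      simp only [← hm', ← map_add]
      rw [hm a b c]
    · obtain ⟨p, hp⟩ := hsolv
      refine ⟨p, ?_⟩
      rw [← hmaptop, ← aux_map_der m m' A.mkQ hm', hp, Submodule.map_bot]
    · intro x y
      obtain ⟨x, rfl⟩ := hsur x
      obtain ⟨y, rfl⟩ := hsur y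
      have := aux_ss_map m m' A.mkQ hm' _ (h2 x y)
      rwa [aux_map_gen m m' A.mkQ hm', Set.image_pair] at this
  rw [← hmaptop] at hq
  obtain ⟨k, hk⟩ := aux_ss_of_map m m' A.mkQ hm' ⊤ hq
  rw [Submodule.ker_mkQ] at hk
  exact aux_core m hm hsolv h2 A hA k hk

lemma aux_der_mono (m : L →ₗ[F] L →ₗ[F] L) (S T : Submodule F L) (h : S ≤ T) (n : ℕ) :
    derSeries m S n ≤ derSeries m T n := by
  induction n with
  | zero => exact h
  | succ n ih => exact Submodule.map₂_le_map₂ ih ih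

end Aux

/-- Let `L` be a finite-dimensional solvable Leibniz algebra such that
every two-generated proper subalgebra of `L` is strongly solvable. Then every proper
subalgebra of `L` is strongly solvable. -/
theorem proper_subalgebras_strongly_solvable
    {F : Type*} [Field F] {L : Type*} [AddCommGroup L] [Module F L]
    [FiniteDimensional F L]
    (m : L →ₗ[F] L →ₗ[F] L) (hm : IsLeibniz m)
    (hsolv : IsSolvableAlg m)
    (h2gen : ∀ S : Submodule F L, IsSubalg m S → S ≠ ⊤ → TwoGenerated m S →
      IsStronglySolvable m S) :
    ∀ S : Submodule F L, IsSubalg m S → S ≠ ⊤ → IsStronglySolvable m S := by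
  intro S hS hne
  let mS : S →ₗ[F] S →ₗ[F] S := LinearMap.mk₂ F (fun x y => ⟨m x y, hS x x.2 y y.2⟩)
    (fun a b c => Subtype.ext (by simp)) (fun r a b => Subtype.ext (by simp))
    (fun a b c => Subtype.ext (by simp)) (fun r a b => Subtype.ext (by simp))
  have hf : ∀ x y, S.subtype (mS x y) = m (S.subtype x) (S.subtype y) := fun x y => rfl
  have htop : (⊤ : Submodule F S).map S.subtype = S := by
    rw [Submodule.map_top, Submodule.range_subtype]
  have hker : LinearMap.ker S.subtype = ⊥ := Submodule.ker_subtype S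
  have key : IsStronglySolvable mS ⊤ := by
    refine aux_main _ S mS rfl ?_ ?_ ?_
    · intro a b c
      exact Subtype.ext (hm a b c)
    · obtain ⟨n, hn⟩ := hsolv
      refine ⟨n, ?_⟩
      rw [eq_bot_iff, ← hker, LinearMap.le_ker_iff_map, aux_map_der mS m S.subtype hf, htop,
        eq_bot_iff, ← hn]
      exact aux_der_mono m S ⊤ le_top n
    · intro x y
      have h1 : IsStronglySolvable m ((genBy mS {x, y}).map S.subtype) := by
        apply h2gen
        · rw [aux_map_gen mS m S.subtype hf]
          exact aux_gen_subalg m _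
        · intro h
          exact hne (eq_top_iff.2 (h ▸ Submodule.map_subtype_le S _))
        · refine ⟨x, y, ?_⟩
          rw [aux_map_gen mS m S.subtype hf, Set.image_pair]
          rfl
      obtain ⟨k, hk⟩ := aux_ss_of_map mS m S.subtype hf _ h1
      exact ⟨k, le_bot_iff.1 (hker ▸ hk)⟩
  have := aux_ss_map mS m S.subtype hf ⊤ key
  rwa [htop] at this
end
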